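/- Let N ≥ 3, b < 2, b ≠ 0, and set C_b = (b/4)(1 - b/4)(N-2)², A_{ij}(y) = δ_{ij} + (b²/4 - b) y_i y_j/|y|². Suppose u is a C² function on ℝ^N \ {0} and v is C² on ℝ^N \ {0} related by u(x) = |x|^{-(b/4)(N-2)} v(|x|^{-b/2}x). Then with y = |x|^{-b/2}x, Δ_x u(x) = |y|^{-b(N+2)/(2(2-b))} ( ∑_{i,j} ∂/∂y_j ( A_{ij}(y) ∂v/∂y_i ) - (C_b/|y|²) v ). -/

import Mathlib

open scoped InnerProductSpace

section Aux
variable {E : Type*} [NormedAddCommGroup E] [InnerProductSpace ℝ E]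

/-- Derivative of a real power of the norm away from the origin. -/
theorem aux_norm_rpow (p : ℝ) (z : E) (hz : z ≠ 0) :
    HasFDerivAt (fun w : E => ‖w‖ ^ p) ((p * ‖z‖ ^ (p - 2)) • innerSL ℝ z) z := by
  have hpos : 0 < ‖z‖ := norm_pos_iff.mpr hz
  have h1 : HasFDerivAt (fun w : E => ‖w‖ ^ 2) (2 • innerSL ℝ z) z :=
    (hasStrictFDerivAt_norm_sq z).hasFDerivAt
  have h2 := h1.rpow_const (p := p / 2) (Or.inl (by positivity))
  have h3 : (fun w : E => (‖w‖ ^ 2) ^ (p / 2)) = fun w : E => ‖w‖ ^ p := by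
    funext w
    rw [← Real.rpow_natCast, ← Real.rpow_mul (norm_nonneg w)]
    congr 1
    push_cast
    ring
  rw [h3] at h2
  convert h2 using 1
  have h4 : (‖z‖ ^ 2) ^ (p / 2 - 1) = ‖z‖ ^ (p - 2) := by
    rw [← Real.rpow_natCast, ← Real.rpow_mul (norm_nonneg z)]
    congr 1
    push_cast
    ring
  rw [h4]
  ext e
  simp
  ring

/-- First derivative of the transformed function. -/
theorem aux_first (a c : ℝ) (v : E → ℝ) (z : E) (hz : z ≠ 0) (e : E)
    (hv : DifferentiableAt ℝ v (‖z‖ ^ a • z)) :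
    fderiv ℝ (fun x : E => ‖x‖ ^ c * v (‖x‖ ^ a • x)) z e =
      c * ‖z‖ ^ (c - 2) * inner ℝ z e * v (‖z‖ ^ a • z) +
      ‖z‖ ^ c * (‖z‖ ^ a * fderiv ℝ v (‖z‖ ^ a • z) e +
        a * ‖z‖ ^ (a - 2) * inner ℝ z e * fderiv ℝ v (‖z‖ ^ a • z) z) := by
  have hT := (aux_norm_rpow a z hz).smul (hasFDerivAt_id z)
  have hvT := HasFDerivAt.comp z (f := fun x : E => ‖x‖ ^ a • x) hv.hasFDerivAt hT
  have h := ((aux_norm_rpow c z hz).mul hvT).fderiv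
  have h' := congrArg (fun L => L e) h
  refine Eq.trans h' ?_
  simp
  ring

/-- Second derivative of the transformed function. -/
theorem aux_second (a c : ℝ) (v : E → ℝ) (z : E) (hz : z ≠ 0) (e : E) (he : inner ℝ e e = (1 : ℝ))
    (hv : DifferentiableAt ℝ v (‖z‖ ^ a • z)) (B : E →L[ℝ] E →L[ℝ] ℝ)
    (hB : HasFDerivAt (fderiv ℝ v) B (‖z‖ ^ a • z)) :
    fderiv ℝ (fun x : E => c * ‖x‖ ^ (c - 2) * inner ℝ x e * v (‖x‖ ^ a • x) +
      ‖x‖ ^ c * (‖x‖ ^ a * fderiv ℝ v (‖x‖ ^ a • x) e +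
        a * ‖x‖ ^ (a - 2) * inner ℝ x e * fderiv ℝ v (‖x‖ ^ a • x) x)) z e =
      (c * ((c - 2) * ‖z‖ ^ (c - 4)) * inner ℝ z e ^ 2 + c * ‖z‖ ^ (c - 2)) * v (‖z‖ ^ a • z)
      + c * ‖z‖ ^ (c - 2) * inner ℝ z e * (‖z‖ ^ a * fderiv ℝ v (‖z‖ ^ a • z) e +
        a * ‖z‖ ^ (a - 2) * inner ℝ z e * fderiv ℝ v (‖z‖ ^ a • z) z)
      + c * ‖z‖ ^ (c - 2) * inner ℝ z e * (‖z‖ ^ a * fderiv ℝ v (‖z‖ ^ a • z) e +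
        a * ‖z‖ ^ (a - 2) * inner ℝ z e * fderiv ℝ v (‖z‖ ^ a • z) z)
      + ‖z‖ ^ c * (a * ‖z‖ ^ (a - 2) * inner ℝ z e * fderiv ℝ v (‖z‖ ^ a • z) e
        + ‖z‖ ^ a * (‖z‖ ^ a * B e e + a * ‖z‖ ^ (a - 2) * inner ℝ z e * B z e)
        + (a * ((a - 2) * ‖z‖ ^ (a - 4)) * inner ℝ z e ^ 2 + a * ‖z‖ ^ (a - 2)) *
            fderiv ℝ v (‖z‖ ^ a • z) z
        + a * ‖z‖ ^ (a - 2) * inner ℝ z e * (fderiv ℝ v (‖z‖ ^ a • z) e +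
            ‖z‖ ^ a * B e z + a * ‖z‖ ^ (a - 2) * inner ℝ z e * B z z)) := by
  have hT := (aux_norm_rpow a z hz).smul (hasFDerivAt_id z)
  have hvT := HasFDerivAt.comp z (f := fun x : E => ‖x‖ ^ a • x) hv.hasFDerivAt hT
  have hFT := HasFDerivAt.comp z (f := fun x : E => ‖x‖ ^ a • x) hB hT
  have hin : HasFDerivAt (fun x : E => inner ℝ x e) (innerSL ℝ e) z := by
    have := (innerSL ℝ e).hasFDerivAt (x := z)
    refine this.congr_of_eventuallyEq (Filter.Eventually.of_forall fun x => ?_)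
    simp [real_inner_comm]
  have hFe := hFT.clm_apply (hasFDerivAt_const e z)
  have hFz := hFT.clm_apply (hasFDerivAt_id z)
  have h1 := (((aux_norm_rpow (c - 2) z hz).const_mul c).mul hin).mul hvT
  have h2 := (aux_norm_rpow a z hz).mul hFe
  have h3 := (((aux_norm_rpow (a - 2) z hz).const_mul a).mul hin).mul hFz
  have h := (h1.add ((aux_norm_rpow c z hz).mul (h2.add h3))).fderiv
  have h' := congrArg (fun L => L e) h
  refine Eq.trans h' ?_
  have e1 : c - 2 - 2 = c - 4 := by ring
  have e2 : a - 2 - 2 = a - 4 := by ring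
  have he2 : ‖e‖ = 1 := by
    rw [real_inner_self_eq_norm_sq] at he
    nlinarith [norm_nonneg e]
  simp [he2, e1, e2]
  ring

/-- Derivative of the flux in direction `e`. -/
theorem aux_flux (γ : ℝ) (v : E → ℝ) (y : E) (hy : y ≠ 0) (e : E) (he : inner ℝ e e = (1 : ℝ))
    (B : E →L[ℝ] E →L[ℝ] ℝ) (hB : HasFDerivAt (fderiv ℝ v) B y) :
    fderiv ℝ (fun w : E => fderiv ℝ v w e +
        γ * ‖w‖ ^ (-2 : ℝ) * inner ℝ w e * fderiv ℝ v w w) y e =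
      B e e + γ * (-2 * ‖y‖ ^ (-4 : ℝ)) * inner ℝ y e ^ 2 * fderiv ℝ v y y
      + γ * ‖y‖ ^ (-2 : ℝ) * fderiv ℝ v y y
      + γ * ‖y‖ ^ (-2 : ℝ) * inner ℝ y e * (B e y + fderiv ℝ v y e) := by
  have hin : HasFDerivAt (fun x : E => inner ℝ x e) (innerSL ℝ e) y := by
    have := (innerSL ℝ e).hasFDerivAt (x := y)
    refine this.congr_of_eventuallyEq (Filter.Eventually.of_forall fun x => ?_)
    simp [real_inner_comm]
  have hFe := hB.clm_apply (hasFDerivAt_const e y)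
  have hFz := hB.clm_apply (hasFDerivAt_id y)
  have h := (hFe.add ((((aux_norm_rpow (-2) y hy).const_mul γ).mul hin).mul hFz)).fderiv
  have h' := congrArg (fun L => L e) h
  refine Eq.trans h' ?_
  have e1 : (-2 - 2 : ℝ) = -4 := by norm_num
  have he2 : ‖e‖ = 1 := by
    rw [real_inner_self_eq_norm_sq] at he
    nlinarith [norm_nonneg e]
  simp [he2, e1]
  ring

end Aux

theorem aux_sum_single {N : ℕ} (x : EuclideanSpace ℝ (Fin N)) :
    ∑ i, x i • EuclideanSpace.single i (1 : ℝ) = x := by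
  ext j
  simp [Finset.sum_apply, Pi.single_apply]

theorem aux_sum_lin {N : ℕ} (x : EuclideanSpace ℝ (Fin N))
    (L : EuclideanSpace ℝ (Fin N) →L[ℝ] ℝ) :
    ∑ i, x i * L (EuclideanSpace.single i (1 : ℝ)) = L x := by
  conv_rhs => rw [← aux_sum_single x]
  simp

/-- Transformation of the Laplacian under `u(x) = |x|^{-(b/4)(N-2)} v(|x|^{-b/2}x)`:
with `y = |x|^{-b/2}x`, `A_{ij}(y) = δ_{ij} + (b²/4 - b) y_i y_j/|y|²` and
`C_b = (b/4)(1-b/4)(N-2)²`, one has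
`Δ_x u(x) = |y|^{-b(N+2)/(2(2-b))} (∑_{i,j} ∂_j(A_{ij}(y) ∂_i v) - (C_b/|y|²) v)`. -/
theorem laplacian_transformation (N : ℕ) (hN : 3 ≤ N) (b : ℝ) (hb2 : b < 2) (hb0 : b ≠ 0)
    (u v : EuclideanSpace ℝ (Fin N) → ℝ)
    (hu : ContDiffOn ℝ 2 u {(0 : EuclideanSpace ℝ (Fin N))}ᶜ)
    (hv : ContDiffOn ℝ 2 v {(0 : EuclideanSpace ℝ (Fin N))}ᶜ)
    (hrel : ∀ x : EuclideanSpace ℝ (Fin N), x ≠ 0 →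
      u x = ‖x‖ ^ (-(b / 4) * ((N : ℝ) - 2)) * v (‖x‖ ^ (-(b / 2)) • x)) :
    ∀ x : EuclideanSpace ℝ (Fin N), x ≠ 0 →
      ∀ y : EuclideanSpace ℝ (Fin N), y = ‖x‖ ^ (-(b / 2)) • x →
      (∑ i : Fin N, fderiv ℝ (fun z => fderiv ℝ u z (EuclideanSpace.single i (1 : ℝ))) x
          (EuclideanSpace.single i (1 : ℝ))) =
        ‖y‖ ^ (-(b * ((N : ℝ) + 2)) / (2 * (2 - b))) *
          ((∑ j : Fin N, fderiv ℝ
              (fun w => ∑ i : Fin N,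
                ((if i = j then (1 : ℝ) else 0) + (b ^ 2 / 4 - b) * w i * w j / ‖w‖ ^ 2) *
                  fderiv ℝ v w (EuclideanSpace.single i (1 : ℝ))) y
              (EuclideanSpace.single j (1 : ℝ))) -
            (b / 4) * (1 - b / 4) * ((N : ℝ) - 2) ^ 2 / ‖y‖ ^ 2 * v y) := by
  intro x hx y hy
  have hr : 0 < ‖x‖ := norm_pos_iff.mpr hx
  have hopen : IsOpen ({(0 : EuclideanSpace ℝ (Fin N))}ᶜ) := isOpen_compl_singleton
  have hT0 : ∀ z : EuclideanSpace ℝ (Fin N), z ≠ 0 → ‖z‖ ^ (-(b / 2)) • z ≠ 0 := fun z hz =>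
    smul_ne_zero (Real.rpow_pos_of_pos (norm_pos_iff.mpr hz) _).ne' hz
  have hvd : ∀ w : EuclideanSpace ℝ (Fin N), w ≠ 0 → DifferentiableAt ℝ v w := fun w hw =>
    (hv.contDiffAt (hopen.mem_nhds hw)).differentiableAt (by norm_num)
  have hy0 : y ≠ 0 := hy ▸ hT0 x hx
  have hB : HasFDerivAt (fderiv ℝ v) (fderiv ℝ (fderiv ℝ v) y) y := by
    have h1 : ContDiffAt ℝ 1 (fderiv ℝ v) y :=
      (hv.contDiffAt (hopen.mem_nhds hy0)).fderiv_right (by norm_num)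
    exact (h1.differentiableAt (by norm_num)).hasFDerivAt
  generalize hBdef : fderiv ℝ (fderiv ℝ v) y = B at hB
  have hsingle : ∀ i : Fin N, inner ℝ (EuclideanSpace.single i (1 : ℝ))
      (EuclideanSpace.single i (1 : ℝ)) = (1 : ℝ) := by
    intro i
    simp
  have hinner : ∀ (z : EuclideanSpace ℝ (Fin N)) (i : Fin N),
      inner ℝ z (EuclideanSpace.single i (1 : ℝ)) = z i := by
    intro z i
    simp [EuclideanSpace.inner_single_right]
  have hsq : ∀ z : EuclideanSpace ℝ (Fin N), ∑ i, z i ^ 2 = ‖z‖ ^ 2 := by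
    intro z
    rw [EuclideanSpace.real_norm_sq_eq]
  have hnhds : ∀ z : EuclideanSpace ℝ (Fin N), z ≠ 0 → ∀ᶠ w in nhds z, w ≠ 0 := fun z hz =>
    hopen.mem_nhds hz
  -- left side
  have hev : ∀ i : Fin N, (fun z => fderiv ℝ u z (EuclideanSpace.single i (1 : ℝ))) =ᶠ[nhds x]
      fun z => (-(b / 4) * ((N : ℝ) - 2)) * ‖z‖ ^ ((-(b / 4) * ((N : ℝ) - 2)) - 2) *
        inner ℝ z (EuclideanSpace.single i (1 : ℝ)) * v (‖z‖ ^ (-(b / 2)) • z) +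
      ‖z‖ ^ (-(b / 4) * ((N : ℝ) - 2)) * (‖z‖ ^ (-(b / 2)) *
          fderiv ℝ v (‖z‖ ^ (-(b / 2)) • z) (EuclideanSpace.single i (1 : ℝ)) +
        (-(b / 2)) * ‖z‖ ^ ((-(b / 2)) - 2) * inner ℝ z (EuclideanSpace.single i (1 : ℝ)) *
          fderiv ℝ v (‖z‖ ^ (-(b / 2)) • z) z) := by
    intro i
    filter_upwards [hnhds x hx] with z hz
    have : u =ᶠ[nhds z] fun x => ‖x‖ ^ (-(b / 4) * ((N : ℝ) - 2)) * v (‖x‖ ^ (-(b / 2)) • x) := by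
      filter_upwards [hnhds z hz] with w hw using hrel w hw
    rw [this.fderiv_eq]
    exact aux_first _ _ v z hz (EuclideanSpace.single i (1 : ℝ)) (hvd _ (hT0 z hz))
  have hL := fun i : Fin N => (DFunLike.congr_fun (hev i).fderiv_eq
      (EuclideanSpace.single i (1 : ℝ))).trans
    (aux_second (-(b / 2)) (-(b / 4) * ((N : ℝ) - 2)) v x hx (EuclideanSpace.single i (1 : ℝ))
      (hsingle i) (hvd _ (hT0 x hx)) B (hy ▸ hB))
  -- right side
  have hfun : ∀ j : Fin N, (fun w : EuclideanSpace ℝ (Fin N) => ∑ i : Fin N,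
              ((if i = j then (1 : ℝ) else 0) + (b ^ 2 / 4 - b) * w i * w j / ‖w‖ ^ 2) *
                fderiv ℝ v w (EuclideanSpace.single i (1 : ℝ))) =
      fun w => fderiv ℝ v w (EuclideanSpace.single j (1 : ℝ)) +
        (b ^ 2 / 4 - b) * ‖w‖ ^ (-2 : ℝ) * inner ℝ w (EuclideanSpace.single j (1 : ℝ)) *
          fderiv ℝ v w w := by
    intro j
    funext w
    rw [← aux_sum_lin w (fderiv ℝ v w), Finset.mul_sum, hinner]
    have h2 : ‖w‖ ^ (-2 : ℝ) = (‖w‖ ^ 2)⁻¹ := by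
      rw [Real.rpow_neg (norm_nonneg w)]
      norm_num
    rw [h2]
    simp only [add_mul, Finset.sum_add_distrib, ite_mul, one_mul, zero_mul,
      Finset.sum_ite_eq', Finset.mem_univ, if_true]
    congr 1
    refine Finset.sum_congr rfl fun i _ => ?_
    rw [div_eq_mul_inv]
    ring
  have hR := fun j : Fin N => (congrArg (fun f => fderiv ℝ f y (EuclideanSpace.single j (1 : ℝ)))
      (hfun j)).trans
    (aux_flux (b ^ 2 / 4 - b) v y hy0 (EuclideanSpace.single j (1 : ℝ)) (hsingle j) B hB)
  rw [Finset.sum_congr rfl fun i _ => hL i, Finset.sum_congr rfl fun i _ => hR i]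
  simp only [hinner, ← hy]
  set c : ℝ := -(b / 4) * ((N : ℝ) - 2) with hc
  set a : ℝ := -(b / 2) with ha
  set F := fderiv ℝ v y with hF
  have hFx : ∀ z : EuclideanSpace ℝ (Fin N),
      ∑ i, z i * F (EuclideanSpace.single i (1 : ℝ)) = F z := fun z => aux_sum_lin z F
  have hB1 : ∀ w z : EuclideanSpace ℝ (Fin N),
      ∑ i, z i * B w (EuclideanSpace.single i (1 : ℝ)) = B w z := fun w z => aux_sum_lin z (B w)
  have hB2 : ∀ w z : EuclideanSpace ℝ (Fin N),
      ∑ i, z i * B (EuclideanSpace.single i (1 : ℝ)) w = B z w := fun w z => by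
    simpa using aux_sum_lin z (B.flip w)
  have hny : ‖y‖ = ‖x‖ ^ a * ‖x‖ := by
    rw [hy, norm_smul, Real.norm_of_nonneg (Real.rpow_nonneg hr.le _)]
  obtain ⟨S, hS⟩ : ∃ S, S = ∑ i : Fin N, B (EuclideanSpace.single i (1 : ℝ))
    (EuclideanSpace.single i (1 : ℝ)) := ⟨_, rfl⟩
  have hLsum : ∀ p1 p2 p3 p4 p5 p6 p7 : ℝ, ∑ i : Fin N, (p1 * x i ^ 2 + p2 +
      p3 * (x i * F (EuclideanSpace.single i (1 : ℝ))) +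
      p4 * B (EuclideanSpace.single i (1 : ℝ)) (EuclideanSpace.single i (1 : ℝ)) +
      p5 * (x i * B x (EuclideanSpace.single i (1 : ℝ))) +
      p6 * (x i * B (EuclideanSpace.single i (1 : ℝ)) x) + p7 * x i ^ 2) =
      p1 * ‖x‖ ^ 2 + N * p2 + p3 * F x + p4 * S + p5 * B x x + p6 * B x x + p7 * ‖x‖ ^ 2 := by
    intro p1 p2 p3 p4 p5 p6 p7
    simp only [Finset.sum_add_distrib, ← Finset.mul_sum, hsq, hFx, hB1, hB2, ← hS]
    simp
  have hRsum : ∀ p1 p2 p3 p4 : ℝ, ∑ i : Fin N, (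
      B (EuclideanSpace.single i (1 : ℝ)) (EuclideanSpace.single i (1 : ℝ)) + p1 * y i ^ 2 + p2 +
      p3 * (y i * B (EuclideanSpace.single i (1 : ℝ)) y) +
      p4 * (y i * F (EuclideanSpace.single i (1 : ℝ)))) =
      S + p1 * ‖y‖ ^ 2 + N * p2 + p3 * B y y + p4 * F y := by
    intro p1 p2 p3 p4
    simp only [Finset.sum_add_distrib, ← Finset.mul_sum, hsq, hFx, hB2, ← hS]
    simp
  have hLs := hLsum (c * ((c - 2) * ‖x‖ ^ (c - 4)) * v y
        + 2 * c * ‖x‖ ^ (c - 2) * a * ‖x‖ ^ (a - 2) * F x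
        + ‖x‖ ^ c * (a * ((a - 2) * ‖x‖ ^ (a - 4)) * F x))
    (c * ‖x‖ ^ (c - 2) * v y + ‖x‖ ^ c * (a * ‖x‖ ^ (a - 2)) * F x)
    (2 * c * ‖x‖ ^ (c - 2) * ‖x‖ ^ a + 2 * ‖x‖ ^ c * a * ‖x‖ ^ (a - 2))
    (‖x‖ ^ c * ‖x‖ ^ a * ‖x‖ ^ a)
    (‖x‖ ^ c * ‖x‖ ^ a * (a * ‖x‖ ^ (a - 2)))
    (‖x‖ ^ c * (a * ‖x‖ ^ (a - 2)) * ‖x‖ ^ a)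
    (‖x‖ ^ c * (a * ‖x‖ ^ (a - 2)) * (a * ‖x‖ ^ (a - 2)) * B x x)
  have hRs := hRsum ((b ^ 2 / 4 - b) * (-2 * ‖y‖ ^ (-4 : ℝ)) * F y)
    ((b ^ 2 / 4 - b) * ‖y‖ ^ (-2 : ℝ) * F y) ((b ^ 2 / 4 - b) * ‖y‖ ^ (-2 : ℝ))
    ((b ^ 2 / 4 - b) * ‖y‖ ^ (-2 : ℝ))
  rw [Finset.sum_congr rfl fun i _ => ?_, hLs]
  rotate_left
  · ring
  rw [Finset.sum_congr (g := fun i => B (EuclideanSpace.single i (1 : ℝ))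
      (EuclideanSpace.single i (1 : ℝ)) +
      ((b ^ 2 / 4 - b) * (-2 * ‖y‖ ^ (-4 : ℝ)) * F y) * y i ^ 2 +
      ((b ^ 2 / 4 - b) * ‖y‖ ^ (-2 : ℝ) * F y) +
      ((b ^ 2 / 4 - b) * ‖y‖ ^ (-2 : ℝ)) * (y i * B (EuclideanSpace.single i (1 : ℝ)) y) +
      ((b ^ 2 / 4 - b) * ‖y‖ ^ (-2 : ℝ)) * (y i * F (EuclideanSpace.single i (1 : ℝ))))
      rfl fun i _ => by ring, hRs]
  have hFy : F y = ‖x‖ ^ a * F x := by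
    conv_lhs => rw [hy]
    simp
  have hByy : B y y = ‖x‖ ^ a * (‖x‖ ^ a * B x x) := by
    have : ∀ t : ℝ, B (t • x) (t • x) = t * (t * B x x) := by
      intro t
      simp
    conv_lhs => rw [hy]
    exact this _
  have hpre : ‖y‖ ^ (-(b * ((N : ℝ) + 2)) / (2 * (2 - b))) = ‖x‖ ^ c * ‖x‖ ^ a * ‖x‖ ^ a := by
    have h1 : ‖y‖ = ‖x‖ ^ (a + 1) := by
      rw [hny, Real.rpow_add hr, Real.rpow_one]
    rw [h1, ← Real.rpow_mul hr.le, ← Real.rpow_add hr, ← Real.rpow_add hr]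
    congr 1
    have : 2 - b ≠ 0 := by linarith
    rw [hc, ha]
    field_simp
    ring
  have hypos : 0 < ‖y‖ := norm_pos_iff.mpr hy0
  have hsub2 : ∀ p : ℝ, ‖x‖ ^ (p - 2) = ‖x‖ ^ p / ‖x‖ ^ 2 := fun p => by
    rw [Real.rpow_sub hr]; norm_num
  have hsub4 : ∀ p : ℝ, ‖x‖ ^ (p - 4) = ‖x‖ ^ p / ‖x‖ ^ 4 := fun p => by
    rw [Real.rpow_sub hr]; norm_num
  have hy2 : ‖y‖ ^ (-2 : ℝ) = (‖y‖ ^ 2)⁻¹ := by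
    rw [Real.rpow_neg hypos.le]; norm_num
  have hy4 : ‖y‖ ^ (-4 : ℝ) = (‖y‖ ^ 4)⁻¹ := by
    rw [Real.rpow_neg hypos.le]; norm_num
  rw [hpre, hy2, hy4, hFy, hByy]
  simp only [hsub2, hsub4]
  rw [hny]
  have hp : 0 < ‖x‖ ^ a := Real.rpow_pos_of_pos hr _
  have hq : 0 < ‖x‖ ^ c := Real.rpow_pos_of_pos hr _
  generalize ‖x‖ ^ a = P at hp ⊢
  generalize ‖x‖ ^ c = Q at hq ⊢
  generalize ‖x‖ = r at hr ⊢
  generalize F x = f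
  generalize B x x = β
  generalize v y = V
  rw [hc, ha]
  field_simp
  ring
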